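/- For every compact subset K of [0, ∞), the set {ζ ∈ 𝔖 : Re ζ ∈ K} is finite. -/

import Mathlib

open MeasureTheory Set

/-- The ordinary differential operator `H_ζ` acting on functions on `ℝ`:
`(H_ζ f)(x) = f″(x) + (β₁(x)+β₂(x))·f′(x)
  + (ζ²·a(x)² − iζ·a′(x) + iζ·a(x)·(β₁(x)−β₂(x)) + β₃(x))·f(x)`. -/
noncomputable def Hop (a : ℝ → ℝ) (β₁ β₂ β₃ : ℝ → ℂ) (ζ : ℂ) (f : ℝ → ℂ) (x : ℝ) : ℂ :=
  deriv (deriv f) x + (β₁ x + β₂ x) * deriv f x +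
    (ζ ^ 2 * (Complex.ofReal (a x)) ^ 2 - Complex.I * ζ * Complex.ofReal (deriv a x)
      + Complex.I * ζ * Complex.ofReal (a x) * (β₁ x - β₂ x) + β₃ x) * f x

/-- The `L²` norm of `f` over the set `J ⊆ ℝ` (w.r.t. Lebesgue measure). -/
noncomputable def L2 (f : ℝ → ℂ) (J : Set ℝ) : ℝ := (∫ x in J, ‖f x‖ ^ 2) ^ ((1 : ℝ)/2)

/-- The set `𝔖` of `ζ ∈ ℂ` for which the Dirichlet problem `H_ζ g = 0` on `I = [-r,r]`,
`g(-r) = g(r) = 0`, has a nontrivial solution. -/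
def frakS (r : ℝ) (a : ℝ → ℝ) (β₁ β₂ β₃ : ℝ → ℂ) : Set ℂ :=
  {ζ : ℂ | ∃ g : ℝ → ℂ, ContDiff ℝ 2 g ∧ (∃ x ∈ Icc (-r) r, g x ≠ 0) ∧
    (∀ x ∈ Icc (-r) r, Hop a β₁ β₂ β₃ ζ g x = 0) ∧ g (-r) = 0 ∧ g r = 0}

/-!
Let `D ζ` be the value at the right end point of the solution of `H_ζ g = 0` with `g = 0`, `g' = 1`
at the left end point, so that `𝔖` is the zero set of `D`. Volterra operators are quasinilpotent,
hence the fundamental solution is `(1 - V ζ)⁻¹ 1` with `V` entire in `ζ`, and `D` is entire.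

On a vertical strip, `Re (ζ² a²)` tends to `-∞` uniformly in `x` as `|Im ζ| → ∞`, and dominates the
other coefficients. Then `(|g|²)'' > 0` wherever `g ≠ 0`, so by the maximum principle a solution
vanishing at both end points is zero. Thus `D` is not identically zero, and its zeros in the strip
lie in a compact rectangle, where there can be only finitely many of them.
-/

section Volterra

variable {E : Type*} [NormedAddCommGroup E] [NormedSpace ℂ E] {c d : ℝ}

/-- Integration from the left end point, as a bounded operator on continuous functions. -/
noncomputable def primitiveCLM (h : c ≤ d) : C(Icc c d, E) →L[ℂ] C(Icc c d, E) :=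
  LinearMap.mkContinuous
    { toFun := fun φ =>
        { toFun := fun x => ∫ t in c..x, IccExtend h φ t
          continuous_toFun := (intervalIntegral.continuous_primitive
            (fun _ _ => (φ.continuous.Icc_extend' (h := h)).intervalIntegrable _ _) c).comp
              continuous_subtype_val }
      map_add' := fun φ ψ => by
        ext x
        exact intervalIntegral.integral_add
          ((φ.continuous.Icc_extend' (h := h)).intervalIntegrable _ _)
          ((ψ.continuous.Icc_extend' (h := h)).intervalIntegrable _ _)
      map_smul' := fun k φ => by
        ext x
        exact intervalIntegral.integral_smul k (IccExtend h φ) }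
    (d - c) (fun φ => by
      refine (ContinuousMap.norm_le _ (mul_nonneg (sub_nonneg.2 h) (norm_nonneg φ))).2 fun x => ?_
      refine (intervalIntegral.norm_integral_le_of_norm_le_const
        (C := ‖φ‖) fun t _ => φ.norm_coe_le_norm _).trans ?_
      rw [abs_of_nonneg (sub_nonneg.2 x.2.1), mul_comm]
      gcongr
      exact x.2.2)

theorem primitiveCLM_apply (h : c ≤ d) (φ : C(Icc c d, E)) (x : Icc c d) :
    primitiveCLM h φ x = ∫ t in c..x, IccExtend h φ t := rfl

theorem primitiveCLM_apply_left (h : c ≤ d) (φ : C(Icc c d, E)) :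
    primitiveCLM h φ ⟨c, left_mem_Icc.2 h⟩ = 0 :=
  intervalIntegral.integral_same

theorem hasDerivWithinAt_IccExtend_primitiveCLM [CompleteSpace E] (h : c ≤ d)
    (φ : C(Icc c d, E)) (x : Icc c d) :
    HasDerivWithinAt (IccExtend h (primitiveCLM h φ)) (φ x) (Icc c d) x := by
  have hFTC := (φ.continuous.Icc_extend' (h := h)).integral_hasStrictDerivAt c x
  rw [IccExtend_val] at hFTC
  refine hFTC.hasDerivAt.hasDerivWithinAt.congr_of_mem (fun t ht => ?_) x.2
  rw [IccExtend_of_mem h _ ht, primitiveCLM_apply]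

theorem integral_sub_pow_div_factorial (c x : ℝ) (n : ℕ) :
    ∫ t in c..x, (t - c) ^ n / n.factorial = (x - c) ^ (n + 1) / (n + 1).factorial := by
  rw [intervalIntegral.integral_div, intervalIntegral.integral_comp_sub_right (fun t => t ^ n) c,
    integral_pow, Nat.factorial_succ]
  push_cast
  field_simp
  simp

theorem norm_primitiveCLM_apply_le_pow_div_factorial (h : c ≤ d) {φ : C(Icc c d, E)} {n : ℕ}
    {k : ℝ} (hφ : ∀ x : Icc c d, ‖φ x‖ ≤ k * ((x - c) ^ n / n.factorial)) (x : Icc c d) :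
    ‖primitiveCLM h φ x‖ ≤ k * ((x - c) ^ (n + 1) / (n + 1).factorial) := by
  rw [primitiveCLM_apply, ← integral_sub_pow_div_factorial,
    ← intervalIntegral.integral_const_mul]
  refine intervalIntegral.norm_integral_le_of_norm_le x.2.1 (.of_forall fun t ht => ?_)
    (Continuous.intervalIntegrable (by fun_prop) _ _)
  have ht' : t ∈ Icc c d := ⟨ht.1.le, ht.2.trans x.2.2⟩
  rw [IccExtend_of_mem h _ ht']
  exact hφ ⟨t, ht'⟩

end Volterra

theorem isUnit_one_sub_of_norm_pow_le_div_factorial {R : Type*} [NormedRing R] [CompleteSpace R]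
    {V : R} {C : ℝ} (hV : ∀ n : ℕ, ‖V ^ n‖ ≤ C ^ n / n.factorial) : IsUnit (1 - V) := by
  have hs : Summable (V ^ · : ℕ → R) :=
    .of_norm_bounded (Real.summable_pow_div_factorial C) hV
  exact isUnit_iff_exists.2 ⟨_, hs.one_sub_mul_tsum_pow, hs.tsum_pow_mul_one_sub⟩

theorem differentiable_inverse_one_sub_apply {𝕜 X F : Type*} [NontriviallyNormedField 𝕜]
    [NormedAddCommGroup X] [NormedSpace 𝕜 X] [NormedAddCommGroup F] [NormedSpace 𝕜 F]
    [CompleteSpace F] {V : X → F →L[𝕜] F} (hV : Differentiable 𝕜 V)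
    (hunit : ∀ x, IsUnit (1 - V x)) (v : F) :
    Differentiable 𝕜 fun x => Ring.inverse (1 - V x) v :=
  ((hV.const_sub 1).inverse hunit).clm_apply (differentiable_const v)

section FundamentalSolution

variable {𝔸 : Type*} [NormedRing 𝔸] [NormedAlgebra ℂ 𝔸] {c d : ℝ}

/-- The Volterra operator `Φ ↦ ∫ A Φ`, for which `(1 - volterraCLM h A) Φ = 1` is the integrated
form of the initial value problem `Φ' = A Φ`, `Φ c = 1`. -/
noncomputable def volterraCLM (h : c ≤ d) (A : C(Icc c d, 𝔸)) :
    C(Icc c d, 𝔸) →L[ℂ] C(Icc c d, 𝔸) :=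
  primitiveCLM h * ContinuousLinearMap.mul ℂ C(Icc c d, 𝔸) A

theorem norm_volterraCLM_pow_apply_le (h : c ≤ d) (A Φ : C(Icc c d, 𝔸)) (n : ℕ) (x : Icc c d) :
    ‖(volterraCLM h A ^ n) Φ x‖ ≤ ‖A‖ ^ n * ‖Φ‖ * ((x - c) ^ n / n.factorial) := by
  induction n generalizing x with
  | zero => simpa using Φ.norm_coe_le_norm x
  | succ n ih =>
    rw [pow_succ']
    refine norm_primitiveCLM_apply_le_pow_div_factorial h (fun t => ?_) x
    calc ‖A t * (volterraCLM h A ^ n) Φ t‖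
        ≤ ‖A t‖ * ‖(volterraCLM h A ^ n) Φ t‖ := norm_mul_le _ _
      _ ≤ ‖A‖ * (‖A‖ ^ n * ‖Φ‖ * ((t - c) ^ n / n.factorial)) := by
        gcongr
        exacts [A.norm_coe_le_norm t, ih t]
      _ = ‖A‖ ^ (n + 1) * ‖Φ‖ * ((t - c) ^ n / n.factorial) := by ring

theorem norm_volterraCLM_pow_le (h : c ≤ d) (A : C(Icc c d, 𝔸)) (n : ℕ) :
    ‖volterraCLM h A ^ n‖ ≤ (‖A‖ * (d - c)) ^ n / n.factorial := by
  have hcd : 0 ≤ d - c := sub_nonneg.2 h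
  refine ContinuousLinearMap.opNorm_le_bound _ (by positivity) fun Φ => ?_
  refine (ContinuousMap.norm_le _ (by positivity)).2 fun x => ?_
  have hx : 0 ≤ (x : ℝ) - c := sub_nonneg.2 x.2.1
  calc ‖(volterraCLM h A ^ n) Φ x‖
      ≤ ‖A‖ ^ n * ‖Φ‖ * ((x - c) ^ n / n.factorial) := norm_volterraCLM_pow_apply_le h A Φ n x
    _ ≤ ‖A‖ ^ n * ‖Φ‖ * ((d - c) ^ n / n.factorial) := by gcongr; exact x.2.2
    _ = (‖A‖ * (d - c)) ^ n / n.factorial * ‖Φ‖ := by rw [mul_pow]; ring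

variable [CompleteSpace 𝔸]

theorem isUnit_one_sub_volterraCLM (h : c ≤ d) (A : C(Icc c d, 𝔸)) :
    IsUnit (1 - volterraCLM h A) :=
  isUnit_one_sub_of_norm_pow_le_div_factorial (R := C(Icc c d, 𝔸) →L[ℂ] C(Icc c d, 𝔸))
    (norm_volterraCLM_pow_le h A)

/-- The solution of `Φ' = A Φ`, `Φ c = 1` on `[c, d]`, with values in a Banach algebra. -/
noncomputable def fundamentalSolution (h : c ≤ d) (A : C(Icc c d, 𝔸)) : C(Icc c d, 𝔸) :=
  Ring.inverse (1 - volterraCLM h A) 1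

theorem fundamentalSolution_eq_one_add_primitiveCLM (h : c ≤ d) (A : C(Icc c d, 𝔸)) :
    fundamentalSolution h A = 1 + primitiveCLM h (A * fundamentalSolution h A) :=
  sub_eq_iff_eq_add.1 <| congrArg (fun T : C(Icc c d, 𝔸) →L[ℂ] C(Icc c d, 𝔸) => T 1)
    (Ring.mul_inverse_cancel _ (isUnit_one_sub_volterraCLM h A))

theorem fundamentalSolution_left (h : c ≤ d) (A : C(Icc c d, 𝔸)) :
    fundamentalSolution h A ⟨c, left_mem_Icc.2 h⟩ = 1 := by
  rw [fundamentalSolution_eq_one_add_primitiveCLM, ContinuousMap.add_apply,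
    primitiveCLM_apply_left, add_zero, ContinuousMap.one_apply]

theorem hasDerivWithinAt_IccExtend_fundamentalSolution (h : c ≤ d) (A : C(Icc c d, 𝔸))
    (x : Icc c d) :
    HasDerivWithinAt (IccExtend h (fundamentalSolution h A)) (A x * fundamentalSolution h A x)
      (Icc c d) x := by
  refine ((hasDerivWithinAt_IccExtend_primitiveCLM h (A * fundamentalSolution h A) x).const_add
    1).congr_of_mem (fun t _ => ?_) x.2
  exact congrArg (fun Φ : C(Icc c d, 𝔸) => IccExtend h Φ t)
    (fundamentalSolution_eq_one_add_primitiveCLM h A)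

theorem differentiable_fundamentalSolution {Z : Type*} [NormedAddCommGroup Z] [NormedSpace ℂ Z]
    (h : c ≤ d) {A : Z → C(Icc c d, 𝔸)} (hA : Differentiable ℂ A) :
    Differentiable ℂ fun z => fundamentalSolution h (A z) := by
  have hV : Differentiable ℂ fun z => volterraCLM h (A z) :=
    (differentiable_const (primitiveCLM h)).clm_comp
      ((ContinuousLinearMap.mul ℂ C(Icc c d, 𝔸)).differentiable.comp hA)
  exact differentiable_inverse_one_sub_apply hV (fun z => isUnit_one_sub_volterraCLM h (A z)) 1

end FundamentalSolution

section LinearODE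

variable {E : Type*} [NormedAddCommGroup E] [NormedSpace ℂ E] [CompleteSpace E] {c d : ℝ}

theorem hasDerivWithinAt_fundamentalSolution_apply (h : c ≤ d) (A : C(Icc c d, E →L[ℂ] E)) (v : E)
    (x : Icc c d) :
    HasDerivWithinAt (fun t => IccExtend h (fundamentalSolution h A) t v)
      (A x (fundamentalSolution h A x v)) (Icc c d) x :=
  (ContinuousLinearMap.apply ℂ E v).restrictScalars ℝ |>.hasFDerivAt.comp_hasDerivWithinAt _
    (hasDerivWithinAt_IccExtend_fundamentalSolution h A x)

theorem eq_fundamentalSolution_apply_of_hasDerivWithinAt (h : c ≤ d) {A : C(Icc c d, E →L[ℂ] E)}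
    {y : ℝ → E} (hy : ∀ x : Icc c d, HasDerivWithinAt y (A x (y x)) (Icc c d) x) (x : Icc c d) :
    y x = fundamentalSolution h A x (y c) := by
  have hIci : ∀ {f : ℝ → E}, (∀ x : Icc c d, HasDerivWithinAt f (A x (f x)) (Icc c d) x) →
      ∀ t ∈ Ico c d, HasDerivWithinAt f (IccExtend h A t (f t)) (Ici t) t := by
    intro f hf t ht
    have ht' : t ∈ Icc c d := Ico_subset_Icc_self ht
    rw [IccExtend_of_mem h _ ht']
    exact (hf ⟨t, ht'⟩).mono_of_mem_nhdsWithin (Icc_mem_nhdsGE_of_mem ht)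
  have hsol : ∀ x : Icc c d, HasDerivWithinAt
      (fun t => IccExtend h (fundamentalSolution h A) t (y c))
      (A x (IccExtend h (fundamentalSolution h A) x (y c))) (Icc c d) x := fun x => by
    rw [IccExtend_val]
    exact hasDerivWithinAt_fundamentalSolution_apply h A (y c) x
  have huniq := ODE_solution_unique_of_mem_Icc_right
    (v := fun t y => IccExtend h A t y) (s := fun _ => univ) (K := ‖A‖₊)
    (fun t _ => ((IccExtend h A t).lipschitz.weaken (A.norm_coe_le_norm _)).lipschitzOnWith)
    (fun t ht => (hy ⟨t, ht⟩).continuousWithinAt) (hIci hy) (fun _ _ => mem_univ _)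
    (fun t ht => (hsol ⟨t, ht⟩).continuousWithinAt) (hIci hsol) (fun _ _ => mem_univ _)
    (by simp [fundamentalSolution_left])
  simpa using huniq x.2

end LinearODE

section MaximumPrinciple

theorem deriv_deriv_nonpos_of_isLocalMax {u : ℝ → ℝ} {x : ℝ} (hmax : IsLocalMax u x)
    (hu : ContinuousAt u x) : deriv (deriv u) x ≤ 0 := by
  by_contra! hpos
  have hmin : IsLocalMin u x := isLocalMin_of_deriv_deriv_pos hpos hmax.deriv_eq_zero hu
  have hconst : u =ᶠ[nhds x] fun _ => u x := by
    filter_upwards [hmin, hmax] with z hz hz' using le_antisymm hz' hz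
  exact hpos.ne' (by simpa using hconst.deriv.deriv_eq)

theorem deriv_deriv_norm_sq {F : Type*} [NormedAddCommGroup F] [InnerProductSpace ℝ F]
    {g g' : ℝ → F} {g'' : F} {x : ℝ} (hg : ∀ᶠ t in nhds x, HasDerivAt g (g' t) t)
    (hg' : HasDerivAt g' g'' x) :
    deriv (deriv fun t => ‖g t‖ ^ 2) x = 2 * (inner ℝ (g x) g'' + ‖g' x‖ ^ 2) := by
  have hderiv : deriv (fun t => ‖g t‖ ^ 2) =ᶠ[nhds x] fun t => 2 * inner ℝ (g t) (g' t) :=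
    hg.mono fun t ht => ht.norm_sq.deriv
  rw [hderiv.deriv_eq, ((hg.self_of_nhds.inner ℝ hg').const_mul 2).deriv,
    real_inner_self_eq_norm_sq]

theorem eqOn_zero_of_inner_add_norm_sq_pos {F : Type*} [NormedAddCommGroup F]
    [InnerProductSpace ℝ F] {c d : ℝ} {g g' g'' : ℝ → F} (hg : ContinuousOn g (Icc c d))
    (hg' : ∀ x ∈ Ioo c d, HasDerivAt g (g' x) x) (hg'' : ∀ x ∈ Ioo c d, HasDerivAt g' (g'' x) x)
    (hpos : ∀ x ∈ Ioo c d, g x ≠ 0 → 0 < inner ℝ (g x) (g'' x) + ‖g' x‖ ^ 2)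
    (hc : g c = 0) (hd : g d = 0) : EqOn g 0 (Icc c d) := by
  intro y hy
  by_contra hgy
  obtain ⟨x, hx, hmax⟩ := isCompact_Icc.exists_isMaxOn (f := fun x => ‖g x‖ ^ 2) ⟨y, hy⟩
    (hg.norm.pow 2)
  have hgx : g x ≠ 0 := by
    have : 0 < ‖g x‖ ^ 2 := (pow_pos (norm_pos_iff.2 hgy) 2).trans_le (hmax hy)
    simpa using this.ne'
  have hx' : x ∈ Ioo c d :=
    ⟨hx.1.lt_of_ne (by rintro rfl; exact hgx hc), hx.2.lt_of_ne (by rintro rfl; exact hgx hd)⟩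
  have hnonpos := deriv_deriv_nonpos_of_isLocalMax (hmax.isLocalMax (Icc_mem_nhds hx'.1 hx'.2))
    ((hg' x hx').continuousAt.norm.pow 2)
  rw [deriv_deriv_norm_sq (Filter.eventually_of_mem (Ioo_mem_nhds hx'.1 hx'.2) hg') (hg'' x hx')]
    at hnonpos
  linarith [hpos x hx' hgx]

theorem inner_add_norm_sq_pos {p q z w : ℂ} (hpq : ‖p‖ ^ 2 / 4 + q.re < 0) (hz : z ≠ 0) :
    0 < inner ℝ z (-(p * w) - q * z) + ‖w‖ ^ 2 := by
  have hqz : inner ℝ z (q * z) = q.re * ‖z‖ ^ 2 := by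
    rw [Complex.inner, ← Complex.normSq_eq_norm_sq, ← Complex.re_mul_ofReal, ← Complex.mul_conj,
      mul_assoc]
  have hpw : inner ℝ z (p * w) ≤ ‖z‖ * (‖p‖ * ‖w‖) :=
    norm_mul p w ▸ real_inner_le_norm z (p * w)
  have hsq : ‖z‖ * (‖p‖ * ‖w‖) ≤ ‖p‖ ^ 2 / 4 * ‖z‖ ^ 2 + ‖w‖ ^ 2 := by
    linear_combination sq_nonneg (‖w‖ - ‖p‖ * ‖z‖ / 2)
  have hneg : (‖p‖ ^ 2 / 4 + q.re) * ‖z‖ ^ 2 < 0 := mul_neg_of_neg_of_pos hpq (by positivity)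
  rw [inner_sub_right, inner_neg_right, hqz]
  linarith [hpw.trans hsq]

end MaximumPrinciple

section DirichletProblem

theorem differentiable_const_sub_compLeftContinuous {𝕜 F G X Z : Type*}
    [NontriviallyNormedField 𝕜] [NormedAddCommGroup F] [NormedSpace 𝕜 F] [NormedAddCommGroup G]
    [NormedSpace 𝕜 G] [TopologicalSpace X] [CompactSpace X] [NormedAddCommGroup Z]
    [NormedSpace 𝕜 Z] (A : C(X, G)) (Q : F →L[𝕜] G) {q : Z → C(X, F)} (hq : Differentiable 𝕜 q) :
    Differentiable 𝕜 fun z => A - Q.compLeftContinuous 𝕜 X (q z) :=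
  ((Q.compLeftContinuous 𝕜 X).differentiable.comp hq).const_sub A

/-- The coefficient of the first order system satisfied by `(g, g')` when `g'' + p g' + q g = 0`. -/
noncomputable def companion {𝕜 X : Type*} [NontriviallyNormedField 𝕜] [TopologicalSpace X]
    (p q : C(X, 𝕜)) : C(X, 𝕜 × 𝕜 →L[𝕜] 𝕜 × 𝕜) where
  toFun x :=
    ContinuousLinearMap.inl 𝕜 𝕜 𝕜 ∘L ContinuousLinearMap.snd 𝕜 𝕜 𝕜 -
      p x • (ContinuousLinearMap.inr 𝕜 𝕜 𝕜 ∘L ContinuousLinearMap.snd 𝕜 𝕜 𝕜) -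
      q x • (ContinuousLinearMap.inr 𝕜 𝕜 𝕜 ∘L ContinuousLinearMap.fst 𝕜 𝕜 𝕜)
  continuous_toFun := by fun_prop

theorem companion_apply {𝕜 X : Type*} [NontriviallyNormedField 𝕜] [TopologicalSpace X]
    (p q : C(X, 𝕜)) (x : X) (v : 𝕜 × 𝕜) :
    companion p q x v = (v.2, -(p x * v.2) - q x * v.1) := by
  ext <;> simp [companion]

theorem differentiable_companion {𝕜 X Z : Type*} [NontriviallyNormedField 𝕜] [TopologicalSpace X]
    [CompactSpace X] [NormedAddCommGroup Z] [NormedSpace 𝕜 Z] (p : C(X, 𝕜)) {q : Z → C(X, 𝕜)}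
    (hq : Differentiable 𝕜 q) : Differentiable 𝕜 fun z => companion p (q z) := by
  let Q : 𝕜 →L[𝕜] (𝕜 × 𝕜 →L[𝕜] 𝕜 × 𝕜) := ContinuousLinearMap.toSpanSingleton 𝕜
    (ContinuousLinearMap.inr 𝕜 𝕜 𝕜 ∘L ContinuousLinearMap.fst 𝕜 𝕜 𝕜)
  have haffine : ∀ z, companion p (q z) = companion p 0 - Q.compLeftContinuous 𝕜 X (q z) :=
    fun z => by ext x <;> simp [companion, Q]
  simpa only [haffine] using differentiable_const_sub_compLeftContinuous (companion p 0) Q hq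

variable {c d : ℝ}

/-- The Dirichlet problem `g'' + p g' + q g = 0`, `g c = g d = 0` has a nontrivial solution `g` on
`[c, d]`; the solution is recorded as the pair `y = (g, g')`. -/
def HasDirichletSolution (p q : C(Icc c d, ℂ)) : Prop :=
  ∃ y : ℝ → ℂ × ℂ, (∀ x : Icc c d, HasDerivWithinAt y (companion p q x (y x)) (Icc c d) x) ∧
    (y c).1 = 0 ∧ (y d).1 = 0 ∧ ∃ x ∈ Icc c d, (y x).1 ≠ 0

theorem hasDirichletSolution_of_contDiff {p q : C(Icc c d, ℂ)} {g : ℝ → ℂ} (hg : ContDiff ℝ 2 g)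
    (heq : ∀ x : Icc c d, deriv (deriv g) x + p x * deriv g x + q x * g x = 0)
    (hc : g c = 0) (hd : g d = 0) (hne : ∃ x ∈ Icc c d, g x ≠ 0) : HasDirichletSolution p q := by
  refine ⟨fun x => (g x, deriv g x), fun x => ?_, hc, hd, hne⟩
  have hg' : Differentiable ℝ (deriv g) :=
    ((contDiff_succ_iff_deriv (n := 1)).1 hg).2.2.differentiable one_ne_zero
  have hode : deriv (deriv g) x = -(p x * deriv g x) - q x * g x := by linear_combination heq x
  rw [companion_apply, ← hode]
  exact ((hg.differentiable two_ne_zero x).hasDerivAt.prodMk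
    (hg' x).hasDerivAt).hasDerivWithinAt

theorem not_hasDirichletSolution_of_re_neg {p q : C(Icc c d, ℂ)}
    (hneg : ∀ x, ‖p x‖ ^ 2 / 4 + (q x).re < 0) : ¬HasDirichletSolution p q := by
  rintro ⟨y, hy, hc, hd, x, hx, hyx⟩
  have h : c ≤ d := hx.1.trans hx.2
  have hyIoo : ∀ t ∈ Ioo c d, HasDerivAt y ((y t).2,
      -(p (projIcc c d h t) * (y t).2) - q (projIcc c d h t) * (y t).1) t := fun t ht => by
    rw [projIcc_of_mem h (Ioo_subset_Icc_self ht), ← companion_apply]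
    exact (hy ⟨t, Ioo_subset_Icc_self ht⟩).hasDerivAt (Icc_mem_nhds ht.1 ht.2)
  refine hyx (eqOn_zero_of_inner_add_norm_sq_pos
    (fun t ht => (hy ⟨t, ht⟩).continuousWithinAt.fst) (fun t ht => (hyIoo t ht).fst)
    (fun t ht => (hyIoo t ht).snd) (fun t _ => inner_add_norm_sq_pos (hneg _)) hc hd hx)

/-- The value at `d` of the solution of `g'' + p g' + q g = 0`, `g c = 0`, `g' c = 1`. -/
noncomputable def dirichletDet (h : c ≤ d) (p q : C(Icc c d, ℂ)) : ℂ :=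
  (fundamentalSolution h (companion p q) ⟨d, right_mem_Icc.2 h⟩ (0, 1)).1

theorem HasDirichletSolution.dirichletDet_eq_zero {p q : C(Icc c d, ℂ)} (h : c ≤ d)
    (hpq : HasDirichletSolution p q) : dirichletDet h p q = 0 := by
  obtain ⟨y, hy, hc, hd, x, hx, hyx⟩ := hpq
  have hyc : y c = (y c).2 • (0, 1) := by ext <;> simp [hc]
  have hy_eq : ∀ t : Icc c d,
      y t = (y c).2 • fundamentalSolution h (companion p q) t (0, 1) := fun t => by
    rw [← map_smul, ← hyc]
    exact eq_fundamentalSolution_apply_of_hasDerivWithinAt h hy t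
  have hyc_ne : (y c).2 ≠ 0 := fun h0 => hyx (by simp [hy_eq ⟨x, hx⟩, h0])
  have hdet : (y c).2 * dirichletDet h p q = 0 :=
    (congrArg Prod.fst (hy_eq ⟨d, right_mem_Icc.2 h⟩)).symm.trans hd
  exact (mul_eq_zero.1 hdet).resolve_left hyc_ne

theorem hasDirichletSolution_of_dirichletDet_eq_zero (h : c < d) {p q : C(Icc c d, ℂ)}
    (hdet : dirichletDet h.le p q = 0) : HasDirichletSolution p q := by
  let y : ℝ → ℂ × ℂ := fun t => IccExtend h.le (fundamentalSolution h.le (companion p q)) t (0, 1)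
  have hc : y c = (0, 1) := by simp [y, fundamentalSolution_left]
  have hd : (y d).1 = 0 := by simpa [y, dirichletDet] using hdet
  have hy : ∀ x : Icc c d, HasDerivWithinAt y (companion p q x (y x)) (Icc c d) x := fun x => by
    simpa [y] using hasDerivWithinAt_fundamentalSolution_apply h.le (companion p q) (0, 1) x
  refine ⟨y, hy, by rw [hc], hd, ?_⟩
  by_contra! hzero
  have hcI : c ∈ Icc c d := left_mem_Icc.2 h.le
  have hderiv : HasDerivWithinAt (fun t => (y t).1) 1 (Icc c d) c := by
    have hyc := hy ⟨c, hcI⟩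
    rw [hc, companion_apply] at hyc
    exact hyc.fst
  have hderiv0 : HasDerivWithinAt (fun t => (y t).1) 0 (Icc c d) c :=
    (hasDerivWithinAt_const c _ 0).congr_of_mem hzero hcI
  exact one_ne_zero ((uniqueDiffOn_Icc h c hcI).eq_deriv _ hderiv hderiv0)

theorem differentiable_dirichletDet {Z : Type*} [NormedAddCommGroup Z] [NormedSpace ℂ Z]
    (h : c ≤ d) (p : C(Icc c d, ℂ)) {q : Z → C(Icc c d, ℂ)} (hq : Differentiable ℂ q) :
    Differentiable ℂ fun z => dirichletDet h p (q z) := by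
  let L : C(Icc c d, ℂ × ℂ →L[ℂ] ℂ × ℂ) →L[ℂ] ℂ :=
    ContinuousLinearMap.fst ℂ ℂ ℂ ∘L ContinuousLinearMap.apply ℂ (ℂ × ℂ) (0, 1) ∘L
      ContinuousMap.evalCLM ℂ ⟨d, right_mem_Icc.2 h⟩
  have hsol := differentiable_fundamentalSolution h (differentiable_companion p hq)
  exact Differentiable.comp (g := L) L.differentiable hsol

end DirichletProblem

section Pencil

theorem norm_sq_add_abs_im_sq_le {ζ : ℂ} {S : ℝ} (hre : |ζ.re| ≤ S) (him : 1 ≤ |ζ.im|) :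
    ‖ζ ^ 2 + |ζ.im| ^ 2‖ ≤ (S ^ 2 + 2 * S) * |ζ.im| := by
  have hS : 0 ≤ S := (abs_nonneg _).trans hre
  have hfactor : ζ ^ 2 + |ζ.im| ^ 2 = ζ.re * (ζ.re + 2 * ζ.im * Complex.I) := by
    rw [← Complex.ofReal_pow, sq_abs, Complex.ofReal_pow]
    linear_combination
      (ζ + ζ.re + ζ.im * Complex.I) * (Complex.re_add_im ζ).symm + ζ.im ^ 2 * Complex.I_sq
  have hnorm : ‖(ζ.re + 2 * ζ.im * Complex.I : ℂ)‖ ≤ S + 2 * |ζ.im| :=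
    (norm_add_le _ _).trans (by simpa using hre)
  calc ‖ζ ^ 2 + |ζ.im| ^ 2‖ = |ζ.re| * ‖(ζ.re + 2 * ζ.im * Complex.I : ℂ)‖ := by
        rw [hfactor, norm_mul, Complex.norm_real, Real.norm_eq_abs]
    _ ≤ S * (S + 2 * |ζ.im|) := by gcongr
    _ ≤ (S ^ 2 + 2 * S) * |ζ.im| := by nlinarith [sq_nonneg S]

theorem re_sq_mul_add_mul_add_le {ζ a b e : ℂ} {S : ℝ} (hre : |ζ.re| ≤ S) (him : 1 ≤ |ζ.im|) :
    (ζ ^ 2 * a + ζ * b + e).re ≤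
      ((S ^ 2 + 2 * S) * ‖a‖ + (S + 1) * ‖b‖ + ‖e‖) * |ζ.im| - |ζ.im| ^ 2 * a.re := by
  have hS : 0 ≤ S := (abs_nonneg _).trans hre
  have hζ : ‖ζ‖ ≤ (S + 1) * |ζ.im| := by
    nlinarith [Complex.norm_le_abs_re_add_abs_im ζ]
  have hsplit : (ζ ^ 2 * a + ζ * b + e).re =
      ((ζ ^ 2 + |ζ.im| ^ 2) * a + ζ * b + e).re - |ζ.im| ^ 2 * a.re := by
    rw [← Complex.ofReal_pow, ← Complex.re_ofReal_mul, ← Complex.sub_re]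
    congr 1
    ring
  have hbound : ((ζ ^ 2 + |ζ.im| ^ 2) * a + ζ * b + e).re ≤
      ((S ^ 2 + 2 * S) * ‖a‖ + (S + 1) * ‖b‖ + ‖e‖) * |ζ.im| := calc
    _ ≤ ‖(ζ ^ 2 + |ζ.im| ^ 2) * a + ζ * b + e‖ := Complex.re_le_norm _
    _ ≤ ‖ζ ^ 2 + |ζ.im| ^ 2‖ * ‖a‖ + ‖ζ‖ * ‖b‖ + ‖e‖ :=
      norm_add₃_le.trans_eq (by rw [norm_mul, norm_mul])
    _ ≤ (S ^ 2 + 2 * S) * |ζ.im| * ‖a‖ + (S + 1) * |ζ.im| * ‖b‖ + ‖e‖ * |ζ.im| := by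
      gcongr
      exacts [norm_sq_add_abs_im_sq_le hre him, le_mul_of_one_le_right (norm_nonneg e) him]
    _ = _ := by ring
  linarith

theorem exists_forall_norm_sq_add_re_quadratic_neg {X : Type*} [TopologicalSpace X]
    [CompactSpace X] (p q₀ q₁ : C(X, ℂ)) {q₂ : C(X, ℂ)} (hq₂ : ∀ x, 0 < (q₂ x).re) (S : ℝ) :
    ∃ T : ℝ, ∀ ζ : ℂ, |ζ.re| ≤ S → T ≤ |ζ.im| → ∀ x,
      ‖p x‖ ^ 2 / 4 + ((ζ ^ 2 • q₂ + ζ • q₁ + q₀) x).re < 0 := by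
  let B : C(X, ℝ) := ⟨fun x => ‖p x‖ ^ 2 / 4 +
    ((S ^ 2 + 2 * S) * ‖q₂ x‖ + (S + 1) * ‖q₁ x‖ + ‖q₀ x‖), by fun_prop⟩
  let M : C(X, ℝ) := ⟨fun x => B x / (q₂ x).re, by
    fun_prop (disch := exact fun x => (hq₂ x).ne')⟩
  refine ⟨1 + ‖M‖, fun ζ hre him x => ?_⟩
  have him_one : 1 ≤ |ζ.im| := by linarith [norm_nonneg M]
  have hB : B x < |ζ.im| * (q₂ x).re := by
    rw [← div_lt_iff₀ (hq₂ x)]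
    exact (M.apply_le_norm x).trans_lt (by linarith)
  calc ‖p x‖ ^ 2 / 4 + ((ζ ^ 2 • q₂ + ζ • q₁ + q₀) x).re
      ≤ ‖p x‖ ^ 2 / 4 * |ζ.im| + (((S ^ 2 + 2 * S) * ‖q₂ x‖ + (S + 1) * ‖q₁ x‖ + ‖q₀ x‖) * |ζ.im| -
          |ζ.im| ^ 2 * (q₂ x).re) :=
        add_le_add (le_mul_of_one_le_right (by positivity) him_one)
          (re_sq_mul_add_mul_add_le hre him_one)
    _ = (B x - |ζ.im| * (q₂ x).re) * |ζ.im| := by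
        simp only [B, ContinuousMap.coe_mk]
        ring
    _ < 0 := mul_neg_of_neg_of_pos (sub_neg.2 hB) (zero_lt_one.trans_le him_one)

theorem finite_inter_preimage_zero {D : ℂ → ℂ} (hD : Differentiable ℂ D) {ζ₀ : ℂ} (hζ₀ : D ζ₀ ≠ 0)
    {K : Set ℂ} (hK : IsCompact K) : (K ∩ D ⁻¹' {0}).Finite := by
  have hcodiscrete :=
    (hD.differentiableOn.analyticOnNhd isOpen_univ).preimage_zero_mem_codiscrete hζ₀
  simpa [sdiff_eq] using hK.finite_sdiff_of_mem_codiscreteWithin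
    (Filter.codiscreteWithin_mono (subset_univ K) hcodiscrete)

theorem finite_setOf_re_mem_hasDirichletSolution {c d : ℝ} (h : c < d) (p q₀ q₁ : C(Icc c d, ℂ))
    {q₂ : C(Icc c d, ℂ)} (hq₂ : ∀ x, 0 < (q₂ x).re) {K : Set ℝ} (hK : Bornology.IsBounded K) :
    {ζ : ℂ | ζ.re ∈ K ∧ HasDirichletSolution p (ζ ^ 2 • q₂ + ζ • q₁ + q₀)}.Finite := by
  obtain ⟨S, hS, hKS⟩ := hK.exists_pos_norm_le
  obtain ⟨T, hT⟩ := exists_forall_norm_sq_add_re_quadratic_neg p q₀ q₁ hq₂ S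
  have hnone : ∀ ζ : ℂ, |ζ.re| ≤ S → T ≤ |ζ.im| →
      ¬HasDirichletSolution p (ζ ^ 2 • q₂ + ζ • q₁ + q₀) := fun ζ hre him =>
    not_hasDirichletSolution_of_re_neg (hT ζ hre him)
  let D : ℂ → ℂ := fun ζ => dirichletDet h.le p (ζ ^ 2 • q₂ + ζ • q₁ + q₀)
  have hD : Differentiable ℂ D := differentiable_dirichletDet h.le p (by fun_prop)
  have hD_ne : D (|T| * Complex.I) ≠ 0 := fun hzero =>
    hnone (|T| * Complex.I) (by simpa using hS.le) (by simpa using le_abs_self T)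
      (hasDirichletSolution_of_dirichletDet_eq_zero h hzero)
  refine (finite_inter_preimage_zero hD hD_ne
    (isCompact_Icc.reProdIm isCompact_Icc : IsCompact (Icc (-S) S ×ℂ Icc (-T) T))).subset ?_
  rintro ζ ⟨hζK, hζ⟩
  have hre : |ζ.re| ≤ S := hKS _ hζK
  have him : |ζ.im| ≤ T := le_of_not_ge fun hT_le => hnone ζ hre hT_le hζ
  exact ⟨⟨abs_le.1 hre, abs_le.1 him⟩, hζ.dirichletDet_eq_zero h.le⟩

end Pencil

theorem frakS_re_in_compact_finite_general {r : ℝ} (hr : 0 < r) {a : ℝ → ℝ} (ha : ContDiff ℝ 1 a)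
    (ha0 : ∀ x ∈ Icc (-r) r, a x ≠ 0) {β₁ β₂ β₃ : ℝ → ℂ} (hβ₁ : ContinuousOn β₁ (Icc (-r) r))
    (hβ₂ : ContinuousOn β₂ (Icc (-r) r)) (hβ₃ : ContinuousOn β₃ (Icc (-r) r))
    {K : Set ℝ} (hK : Bornology.IsBounded K) :
    {ζ ∈ frakS r a β₁ β₂ β₃ | ζ.re ∈ K}.Finite := by
  let b₁ : C(Icc (-r) r, ℂ) := ⟨_, hβ₁.domRestrict⟩
  let b₂ : C(Icc (-r) r, ℂ) := ⟨_, hβ₂.domRestrict⟩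
  let b₃ : C(Icc (-r) r, ℂ) := ⟨_, hβ₃.domRestrict⟩
  let α : C(Icc (-r) r, ℂ) := ⟨fun x => ((a x : ℝ) : ℂ), by fun_prop⟩
  let α' : C(Icc (-r) r, ℂ) := ⟨fun x => ((deriv a x : ℝ) : ℂ),
    Complex.continuous_ofReal.comp (ha.continuous_deriv_one.comp continuous_subtype_val)⟩
  have hα : ∀ x, 0 < ((α ^ 2) x).re := fun x => by
    simpa [α, ← Complex.ofReal_pow] using pow_pos (abs_pos.2 (ha0 x x.2)) 2
  refine (finite_setOf_re_mem_hasDirichletSolution (neg_lt_self hr) (b₁ + b₂) b₃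
    (Complex.I • (α * (b₁ - b₂) - α')) hα hK).subset ?_
  rintro ζ ⟨⟨g, hg, hne, heq, hgl, hgr⟩, hζ⟩
  refine ⟨hζ, hasDirichletSolution_of_contDiff hg (fun x => ?_) hgl hgr hne⟩
  have hcoeff : (ζ ^ 2 • α ^ 2 + ζ • Complex.I • (α * (b₁ - b₂) - α') + b₃) x =
      ζ ^ 2 * (a x : ℂ) ^ 2 - Complex.I * ζ * (deriv a x : ℝ)
        + Complex.I * ζ * (a x : ℂ) * (β₁ x - β₂ x) + β₃ x := by
    simp only [b₁, b₂, b₃, α, α', ContinuousMap.add_apply, ContinuousMap.sub_apply,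
      ContinuousMap.mul_apply, ContinuousMap.smul_apply, ContinuousMap.pow_apply,
      ContinuousMap.coe_mk, domRestrict_apply, smul_eq_mul]
    ring
  rw [hcoeff]
  exact heq x x.2

/-- For every compact subset `K` of `[0,∞)`, only finitely many elements of `𝔖`
have real part in `K`. -/
theorem frakS_re_in_compact_finite (r : ℝ) (hr : 0 < r) (a : ℝ → ℝ) (ha : ContDiff ℝ (⊤ : ℕ∞) a)
    (ha0 : ∀ x ∈ Icc (-r) r, a x ≠ 0)
    (β₁ β₂ β₃ : ℝ → ℂ) (hβ₁ : ContDiff ℝ (⊤ : ℕ∞) β₁) (hβ₂ : ContDiff ℝ (⊤ : ℕ∞) β₂)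
    (hβ₃ : ContDiff ℝ (⊤ : ℕ∞) β₃)
    (K : Set ℝ) (hK : IsCompact K) (hK0 : K ⊆ Ici 0) :
    {ζ ∈ frakS r a β₁ β₂ β₃ | ζ.re ∈ K}.Finite :=
  frakS_re_in_compact_finite_general hr (ha.of_le (mod_cast le_top)) ha0 hβ₁.continuous.continuousOn
    hβ₂.continuous.continuousOn hβ₃.continuous.continuousOn hK.isBounded
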